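/- arXiv:2002.05683 — 2 statements merged into one kernel-verified Lean document; each statement's English description precedes it below -/
import Mathlib

section
/- For all z, ẑ in ℝ^m × ℝ^n, the operator Φ is cocoercive with parameter μ/(4L²): ⟨Φ(z) − Φ(ẑ), z − ẑ⟩ ≥ (μ/(4L²)) ‖Φ(z) − Φ(ẑ)‖². -/
open MeasureTheory ProbabilityTheory Real
open scoped RealInnerProductSpace

noncomputable section

/-! Write `Φ = (∇ₓf, -∇ᵧf)`. Adding the strong convexity inequalities at the four corners of the
rectangle spanned by `(x, y)` and `(x', y')` cancels every value of `f` and leaves exactly the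
`μ`-strong monotonicity of `Φ`. The four partial Lipschitz bounds and the Cauchy–Schwarz inequality
make `Φ` Lipschitz with constant `√(4L²)`. Finally, a `μ`-strongly monotone `K`-Lipschitz operator
is `μ/K²`-cocoercive. -/

open scoped NNReal

section Operators

variable {H : Type*} [SeminormedAddCommGroup H] [InnerProductSpace ℝ H] {T : H → H} {μ : ℝ}

/-- `T` is `μ`-strongly monotone; for `T` a gradient this is `μ`-strong convexity of the
potential. -/
def IsStronglyMonotone (μ : ℝ) (T : H → H) : Prop :=
  ∀ z w, μ * ‖z - w‖ ^ 2 ≤ ⟪T z - T w, z - w⟫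

/-- `T` is `β`-cocoercive, i.e. its (set-valued) inverse is `β`-strongly monotone. -/
def IsCocoercive (β : ℝ) (T : H → H) : Prop :=
  ∀ z w, β * ‖T z - T w‖ ^ 2 ≤ ⟪T z - T w, z - w⟫

theorem IsStronglyMonotone.isCocoercive {K : ℝ≥0} (hT : IsStronglyMonotone μ T)
    (hLip : LipschitzWith K T) (hμ : 0 ≤ μ) (hK : 0 < K) :
    IsCocoercive (μ / (K : ℝ) ^ 2) T := by
  intro z w
  have hK' : (K : ℝ) ≠ 0 := by exact_mod_cast hK.ne'
  calc μ / (K : ℝ) ^ 2 * ‖T z - T w‖ ^ 2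
      ≤ μ / (K : ℝ) ^ 2 * (K * ‖z - w‖) ^ 2 := by gcongr; exact hLip.norm_sub_le z w
    _ = μ * ‖z - w‖ ^ 2 := by field_simp
    _ ≤ ⟪T z - T w, z - w⟫ := hT z w

end Operators

section LipschitzL2

variable {X E F G : Type*} [SeminormedAddCommGroup X] [SeminormedAddCommGroup E]
  [SeminormedAddCommGroup F] [SeminormedAddCommGroup G]

theorem lipschitzWith_sqrt_iff_norm_sub_sq_le {g : X → G} {C : ℝ≥0} :
    LipschitzWith (NNReal.sqrt C) g ↔ ∀ x x', ‖g x - g x'‖ ^ 2 ≤ C * ‖x - x'‖ ^ 2 := by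
  rw [lipschitzWith_iff_norm_sub_le]
  refine forall₂_congr fun x x' => ?_
  rw [← sq_le_sq₀ (norm_nonneg _) (by positivity), mul_pow, Real.coe_sqrt,
    Real.sq_sqrt C.coe_nonneg]

theorem lipschitzWith_prodL2_uncurry {A : E → F → G} {a b : ℝ≥0}
    (hfst : ∀ y, LipschitzWith a fun x => A x y) (hsnd : ∀ x, LipschitzWith b (A x)) :
    LipschitzWith (NNReal.sqrt (a ^ 2 + b ^ 2))
      fun z : WithLp 2 (E × F) => A z.fst z.snd := by
  refine lipschitzWith_sqrt_iff_norm_sub_sq_le.2 fun z w => ?_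
  have triangle : ‖A z.fst z.snd - A w.fst w.snd‖ ≤
      a * ‖z.fst - w.fst‖ + b * ‖z.snd - w.snd‖ :=
    (norm_sub_le_norm_sub_add_norm_sub _ (A w.fst z.snd) _).trans
      (add_le_add ((hfst z.snd).norm_sub_le _ _) ((hsnd w.fst).norm_sub_le _ _))
  have cauchy_schwarz (s t : ℝ) : (a * s + b * t) ^ 2 ≤ (a ^ 2 + b ^ 2) * (s ^ 2 + t ^ 2) := by
    linarith [sq_nonneg (a * t - b * s)]
  calc ‖A z.fst z.snd - A w.fst w.snd‖ ^ 2
      ≤ (a * ‖z.fst - w.fst‖ + b * ‖z.snd - w.snd‖) ^ 2 := by gcongr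
    _ ≤ (a ^ 2 + b ^ 2) * (‖z.fst - w.fst‖ ^ 2 + ‖z.snd - w.snd‖ ^ 2) := cauchy_schwarz _ _
    _ = (a ^ 2 + b ^ 2 : ℝ≥0) * ‖z - w‖ ^ 2 := by
      rw [WithLp.prod_norm_sq_eq_of_L2, WithLp.sub_fst, WithLp.sub_snd]
      push_cast
      rfl

theorem lipschitzWith_sqrt_toLp_prodMk {g : X → E} {h : X → F} {C D : ℝ≥0}
    (hg : LipschitzWith (NNReal.sqrt C) g) (hh : LipschitzWith (NNReal.sqrt D) h) :
    LipschitzWith (NNReal.sqrt (C + D)) fun x => WithLp.toLp 2 (g x, h x) := by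
  rw [lipschitzWith_sqrt_iff_norm_sub_sq_le] at hg hh ⊢
  intro x x'
  calc ‖WithLp.toLp 2 (g x, h x) - WithLp.toLp 2 (g x', h x')‖ ^ 2
      = ‖g x - g x'‖ ^ 2 + ‖h x - h x'‖ ^ 2 := WithLp.prod_norm_sq_eq_of_L2 _
    _ ≤ C * ‖x - x'‖ ^ 2 + D * ‖x - x'‖ ^ 2 := add_le_add (hg x x') (hh x x')
    _ = (C + D : ℝ≥0) * ‖x - x'‖ ^ 2 := by push_cast; ring

end LipschitzL2

/-- The operator `Φ(x, y) = (Fx(x, y), -Fy(x, y))` of the saddle-point problem `min_x max_y f`,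
where `Fx` and `Fy` are the partial gradients of `f`. It acts on `WithLp 2 (E × F)`, since the norm
of `E × F` itself is the maximum norm. -/
def saddleOperator {E F : Type*} [Neg F] (Fx : E → F → E) (Fy : E → F → F) (z : WithLp 2 (E × F)) :
    WithLp 2 (E × F) :=
  WithLp.toLp 2 (Fx z.fst z.snd, -Fy z.fst z.snd)

theorem lipschitzWith_saddleOperator {E F : Type*} [SeminormedAddCommGroup E]
    [SeminormedAddCommGroup F] {Fx : E → F → E} {Fy : E → F → F} {a b c d : ℝ≥0}
    (hxx : ∀ y, LipschitzWith a fun x => Fx x y) (hxy : ∀ x, LipschitzWith b (Fx x))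
    (hyx : ∀ y, LipschitzWith c fun x => Fy x y) (hyy : ∀ x, LipschitzWith d (Fy x)) :
    LipschitzWith (NNReal.sqrt (a ^ 2 + b ^ 2 + (c ^ 2 + d ^ 2))) (saddleOperator Fx Fy) :=
  lipschitzWith_sqrt_toLp_prodMk (lipschitzWith_prodL2_uncurry hxx hxy)
    (lipschitzWith_prodL2_uncurry hyx hyy).neg

section InnerProductSpace

variable {E F : Type*} [NormedAddCommGroup E] [InnerProductSpace ℝ E]
  [NormedAddCommGroup F] [InnerProductSpace ℝ F]

theorem inner_saddleOperator_sub (Fx : E → F → E) (Fy : E → F → F) (z w : WithLp 2 (E × F)) :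
    ⟪saddleOperator Fx Fy z - saddleOperator Fx Fy w, z - w⟫ =
      ⟪Fx z.fst z.snd - Fx w.fst w.snd, z.fst - w.fst⟫ +
        ⟪-Fy z.fst z.snd - -Fy w.fst w.snd, z.snd - w.snd⟫ :=
  rfl

theorem isCocoercive_saddleOperator_iff {β : ℝ} {Fx : E → F → E} {Fy : E → F → F} :
    IsCocoercive β (saddleOperator Fx Fy) ↔ ∀ x x' y y',
      β * (‖Fx x y - Fx x' y'‖ ^ 2 + ‖-Fy x y - -Fy x' y'‖ ^ 2) ≤
        ⟪Fx x y - Fx x' y', x - x'⟫ + ⟪-Fy x y - -Fy x' y', y - y'⟫ := by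
  simp only [IsCocoercive, inner_saddleOperator_sub, WithLp.prod_norm_sq_eq_of_L2]
  exact ⟨fun h x x' y y' => h (WithLp.toLp 2 (x, y)) (WithLp.toLp 2 (x', y')),
    fun h z w => h z.fst w.fst z.snd w.snd⟩

theorem isStronglyMonotone_saddleOperator {μ : ℝ} {f : E → F → ℝ} {Fx : E → F → E}
    {Fy : E → F → F}
    (hscx : ∀ y x x', f x y - f x' y - ⟪Fx x' y, x - x'⟫ ≥ μ / 2 * ‖x - x'‖ ^ 2)
    (hscy : ∀ x y y', (-f x y) - (-f x y') - ⟪-Fy x y', y - y'⟫ ≥ μ / 2 * ‖y - y'‖ ^ 2) :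
    IsStronglyMonotone μ (saddleOperator Fx Fy) := by
  intro z w
  have convex_at_z := hscx z.snd w.fst z.fst
  have convex_at_w := hscx w.snd z.fst w.fst
  have concave_at_z := hscy z.fst w.snd z.snd
  have concave_at_w := hscy w.fst z.snd w.snd
  rw [norm_sub_rev, ← neg_sub z.fst w.fst, inner_neg_right] at convex_at_z
  rw [norm_sub_rev, ← neg_sub z.snd w.snd, inner_neg_right] at concave_at_z
  rw [inner_saddleOperator_sub, inner_sub_left, inner_sub_left, WithLp.prod_norm_sq_eq_of_L2,
    WithLp.sub_fst, WithLp.sub_snd]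
  linarith

theorem stmt3_general [CompleteSpace E] [CompleteSpace F] (μ L : ℝ) (hμ : 0 ≤ μ) (hL : 0 < L)
    (f : E → F → ℝ) (Fx : E → F → E) (Fy : E → F → F)
    (_hgradx : ∀ x y, HasGradientAt (fun x' => f x' y) (Fx x y) x)
    (_hgrady : ∀ x y, HasGradientAt (fun y' => f x y') (Fy x y) y)
    (hscx : ∀ y x x', f x y - f x' y - ⟪Fx x' y, x - x'⟫ ≥ μ / 2 * ‖x - x'‖ ^ 2)
    (hsmx : ∀ y x x', ‖Fx x y - Fx x' y‖ ≤ L * ‖x - x'‖)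
    (hscy : ∀ x y y', (-f x y) - (-f x y') - ⟪-Fy x y', y - y'⟫ ≥ μ / 2 * ‖y - y'‖ ^ 2)
    (hsmy : ∀ x y y', ‖Fy x y - Fy x y'‖ ≤ L * ‖y - y'‖)
    (hlxy : ∀ x y y', ‖Fx x y - Fx x y'‖ ≤ L * ‖y - y'‖)
    (hlyx : ∀ y x x', ‖Fy x y - Fy x' y‖ ≤ L * ‖x - x'‖)
    (x x' : E) (y y' : F) :
    ⟪Fx x y - Fx x' y', x - x'⟫ + ⟪(-Fy x y) - (-Fy x' y'), y - y'⟫ ≥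
      μ / (4 * L ^ 2) * (‖Fx x y - Fx x' y'‖ ^ 2 + ‖(-Fy x y) - (-Fy x' y')‖ ^ 2) := by
  lift L to ℝ≥0 using hL.le
  have hLip : LipschitzWith (NNReal.sqrt (L ^ 2 + L ^ 2 + (L ^ 2 + L ^ 2)))
      (saddleOperator Fx Fy) :=
    lipschitzWith_saddleOperator (fun y => lipschitzWith_iff_norm_sub_le.2 (hsmx y))
      (fun x => lipschitzWith_iff_norm_sub_le.2 (hlxy x))
      (fun y => lipschitzWith_iff_norm_sub_le.2 (hlyx y))
      (fun x => lipschitzWith_iff_norm_sub_le.2 (hsmy x))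
  have hsqrt : NNReal.sqrt (L ^ 2 + L ^ 2 + (L ^ 2 + L ^ 2)) = 2 * L := by
    rw [show L ^ 2 + L ^ 2 + (L ^ 2 + L ^ 2) = (2 * L) ^ 2 by ring, NNReal.sqrt_sq]
  rw [hsqrt] at hLip
  have hcoco : IsCocoercive (μ / (4 * L ^ 2)) (saddleOperator Fx Fy) := by
    convert (isStronglyMonotone_saddleOperator hscx hscy).isCocoercive hLip hμ
      (mul_pos two_pos (by exact_mod_cast hL)) using 2
    push_cast
    ring
  exact isCocoercive_saddleOperator_iff.1 hcoco x x' y y'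

end InnerProductSpace

/-- Lemma 2: `Φ` is `μ/(4L²)`-cocoercive. -/
theorem stmt3 {m n : ℕ}
    (μ L : ℝ) (hμ : 0 < μ) (hμL : μ ≤ L)
    (f : EuclideanSpace ℝ (Fin m) → EuclideanSpace ℝ (Fin n) → ℝ)
    (Fx : EuclideanSpace ℝ (Fin m) → EuclideanSpace ℝ (Fin n) → EuclideanSpace ℝ (Fin m))
    (Fy : EuclideanSpace ℝ (Fin m) → EuclideanSpace ℝ (Fin n) → EuclideanSpace ℝ (Fin n))
    (hgradx : ∀ x y, HasGradientAt (fun x' => f x' y) (Fx x y) x)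
    (hgrady : ∀ x y, HasGradientAt (fun y' => f x y') (Fy x y) y)
    (hscx : ∀ y x x', f x y - f x' y - ⟪Fx x' y, x - x'⟫ ≥ μ / 2 * ‖x - x'‖ ^ 2)
    (hsmx : ∀ y x x', ‖Fx x y - Fx x' y‖ ≤ L * ‖x - x'‖)
    (hscy : ∀ x y y', (-f x y) - (-f x y') - ⟪-Fy x y', y - y'⟫ ≥ μ / 2 * ‖y - y'‖ ^ 2)
    (hsmy : ∀ x y y', ‖Fy x y - Fy x y'‖ ≤ L * ‖y - y'‖)
    (hlxy : ∀ x y y', ‖Fx x y - Fx x y'‖ ≤ L * ‖y - y'‖)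
    (hlyx : ∀ y x x', ‖Fy x y - Fy x' y‖ ≤ L * ‖x - x'‖)
    :
    ∀ (x x' : EuclideanSpace ℝ (Fin m)) (y y' : EuclideanSpace ℝ (Fin n)),
      ⟪Fx x y - Fx x' y', x - x'⟫ + ⟪(-Fy x y) - (-Fy x' y'), y - y'⟫ ≥
        μ / (4 * L ^ 2) *
          (‖Fx x y - Fx x' y'‖ ^ 2 + ‖(-Fy x y) - (-Fy x' y')‖ ^ 2) := by
  exact stmt3_general μ L hμ.le (hμ.trans_le hμL) f Fx Fy hgradx hgrady
    hscx hsmx hscy hsmy hlxy hlyx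
end
end

section
/- For every stepsize α > 0, the deterministic GDA iterates on the quadratic saddle function satisfy, for every k ≥ 0, x_{k+1}² + y_{k+1}² ≥ (1 − 1/κ²)(x_k² + y_k²). -/
open MeasureTheory ProbabilityTheory Real
open scoped RealInnerProductSpace

noncomputable section

/-!
With `z = x + iy`, a step of size `α` is multiplication by `1 - αμ + iαL`, so it scales `x² + y²` by
`(1 - αμ)² + (αL)²`. By Cauchy–Schwarz against `(κ, 1)` this factor is at least `κ² / (1 + κ²)`,
which is attained at `αμ = 1 / (1 + κ²)` and exceeds `1 - 1 / κ²`.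
-/

theorem sq_add_sq_gda_step {R : Type*} [CommRing R] (μ L α x y : R) :
    (x - α * (μ * x + L * y)) ^ 2 + (y + α * (L * x - μ * y)) ^ 2 =
      ((1 - α * μ) ^ 2 + (α * L) ^ 2) * (x ^ 2 + y ^ 2) := by
  ring

section OrderedField

variable {K : Type*} [Field K] [LinearOrder K] [IsStrictOrderedRing K]

theorem sq_div_one_add_sq_le_one_sub_sq_add_mul_sq (κ a : K) :
    κ ^ 2 / (1 + κ ^ 2) ≤ (1 - a) ^ 2 + (a * κ) ^ 2 := by
  rw [div_le_iff₀ (by positivity)]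
  calc
    κ ^ 2 ≤ κ ^ 2 + (a * (1 + κ ^ 2) - 1) ^ 2 := le_add_of_nonneg_right (sq_nonneg _)
    _ = ((1 - a) ^ 2 + (a * κ) ^ 2) * (1 + κ ^ 2) := by ring

theorem one_sub_one_div_sq_le_sq_div_one_add_sq {κ : K} (hκ : κ ≠ 0) :
    1 - 1 / κ ^ 2 ≤ κ ^ 2 / (1 + κ ^ 2) := by
  rw [le_div_iff₀ (by positivity)]
  calc
    (1 - 1 / κ ^ 2) * (1 + κ ^ 2) = κ ^ 2 - 1 / κ ^ 2 := by field_simp; ring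
    _ ≤ κ ^ 2 := sub_le_self _ (by positivity)

theorem stmt8_general {μ : K} (hμ : μ ≠ 0) (L : K) (α x y : ℕ → K)
    (hx : ∀ k, x (k + 1) = x k - α k * (μ * x k + L * y k))
    (hy : ∀ k, y (k + 1) = y k + α k * (L * x k - μ * y k)) (k : ℕ) :
    (L / μ) ^ 2 / (1 + (L / μ) ^ 2) * (x k ^ 2 + y k ^ 2) ≤ x (k + 1) ^ 2 + y (k + 1) ^ 2 := by
  have hL : α k * μ * (L / μ) = α k * L := by rw [mul_assoc, mul_div_cancel₀ L hμ]
  rw [hx, hy, sq_add_sq_gda_step, ← hL]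
  gcongr
  exact sq_div_one_add_sq_le_one_sub_sq_add_mul_sq (L / μ) (α k * μ)

end OrderedField

/-- Example 1(i): deterministic GDA on `f(x,y) = (μ/2)x² + Lxy − (μ/2)y²`
contracts no faster than `1 − 1/κ²` per step, where `κ = L/μ`. -/
theorem stmt8 (μ L : ℝ) (hμ : 0 < μ) (hμL : μ ≤ L) (α : ℝ) (hα : 0 < α)
    (x y : ℕ → ℝ)
    (hx : ∀ k, x (k + 1) = x k - α * (μ * x k + L * y k))
    (hy : ∀ k, y (k + 1) = y k + α * (L * x k - μ * y k)) :
    ∀ k, x (k + 1) ^ 2 + y (k + 1) ^ 2 ≥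
      (1 - 1 / (L / μ) ^ 2) * (x k ^ 2 + y k ^ 2) := by
  have hκ : L / μ ≠ 0 := (div_pos (hμ.trans_le hμL) hμ).ne'
  exact fun k ↦ (mul_le_mul_of_nonneg_right (one_sub_one_div_sq_le_sq_div_one_add_sq hκ)
    (by positivity)).trans (stmt8_general hμ.ne' L (fun _ ↦ α) x y hx hy k)
end
end
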